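/- Let R be a conditional rewrite system and i ≥ 0. If u ←h s and s ▷_{R_i} t, then there exists v such that u ▷_{R_i} v and t →h v (one-step commutation of head β-reduction with the nested parallel conditional relation). -/

import Mathlib

/-!
The closure of `NPar` under substitution is admissible: since each `→_{R_i}` is itself closed under
substitution, `NPar Rules i` is generated without the constructor `substC` (`NPar.core`). For
this syntax-directed presentation `NParCore`, a step out of a given term is either congruent or a
rule instance at the root, and parallel steps compose with substitution: `s ▷ t` and `σ ▷ τ` give
`sσ ▷ tτ` (`NParCore.subst_par`).

The head of the application spine of an instance of a left-hand side is a function symbol,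
because left-hand sides are algebraic and not variables, whereas the spine head of a head
β-redex, or of a term starting with an abstraction, is an abstraction. So no rule applies at a
prefix of the spine of a head redex, and `λx⃗.(λy.b) a₀ … aₙ ▷ t` forces
`t = λx⃗.(λy.b') a₀' … aₙ'` with `b ▷ b'` and `aₖ ▷ aₖ'`. Contracting the head redex of `t` gives
a term reached from `λx⃗.b[y:=a₀] a₁ … aₙ` by `subst_par`.
-/

set_option autoImplicit false

/-- λ-terms over a signature `Sig`, in de Bruijn representation
(terms are identified up to α-conversion). -/
inductive Tm (Sig : Type) : Type
  | var : ℕ → Tm Sig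
  | app : Tm Sig → Tm Sig → Tm Sig
  | lam : Tm Sig → Tm Sig
  | sym : Sig → Tm Sig

namespace Tm

variable {Sig : Type}

/-- Shift the free de Bruijn indices `≥ d` up by one. -/
def lift (d : ℕ) : Tm Sig → Tm Sig
  | var n => if n < d then var n else var (n + 1)
  | app t u => app (lift d t) (lift d u)
  | lam t => lam (lift (d + 1) t)
  | sym f => sym f

/-- Lift a parallel substitution under one binder. -/
def up (σ : ℕ → Tm Sig) : ℕ → Tm Sig
  | 0 => var 0
  | n + 1 => lift 0 (σ n)

/-- Capture-avoiding (parallel) substitution. -/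
def subst (σ : ℕ → Tm Sig) : Tm Sig → Tm Sig
  | var n => σ n
  | app t u => app (subst σ t) (subst σ u)
  | lam t => lam (subst (up σ) t)
  | sym f => sym f

def scons (u : Tm Sig) (σ : ℕ → Tm Sig) : ℕ → Tm Sig
  | 0 => u
  | n + 1 => σ n

/-- `subst1 u t` substitutes `u` for the de Bruijn variable `0` in `t`. -/
def subst1 (u t : Tm Sig) : Tm Sig := subst (scons u var) t

/-- `FVar t n` : de Bruijn index `n` occurs free in `t`. -/
def FVar : Tm Sig → ℕ → Prop
  | var m, n => m = n
  | app t u, n => FVar t n ∨ FVar u n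
  | lam t, n => FVar t (n + 1)
  | sym _, _ => False

/-- Closed terms. -/
def ClosedTm (t : Tm Sig) : Prop := ∀ n, ¬ FVar t n

def countVar : Tm Sig → ℕ → ℕ
  | var m, n => if m = n then 1 else 0
  | app t u, n => countVar t n + countVar u n
  | lam t, n => countVar t (n + 1)
  | sym _, _ => 0

/-- Linear terms: each variable occurs at most once. -/
def LinearTm (t : Tm Sig) : Prop := ∀ n, countVar t n ≤ 1

/-- `appList h [t1, …, tn] = h t1 … tn`. -/
def appList (h : Tm Sig) : List (Tm Sig) → Tm Sig
  | [] => h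
  | u :: us => appList (app h u) us

/-- Applicative terms: terms containing no abstraction. -/
inductive Applicative : Tm Sig → Prop
  | var (n : ℕ) : Applicative (var n)
  | sym (f : Sig) : Applicative (sym f)
  | app {t u : Tm Sig} : Applicative t → Applicative u → Applicative (app t u)

/-- Algebraic terms: `t ::= x | f t1 … tn`. -/
inductive Algebraic : Tm Sig → Prop
  | var (n : ℕ) : Algebraic (var n)
  | symApp (f : Sig) (ts : List (Tm Sig)) :
      (∀ t ∈ ts, Algebraic t) → Algebraic (appList (sym f) ts)

/-- `Subterm s t` : `s` is a subterm of `t`. -/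
inductive Subterm : Tm Sig → Tm Sig → Prop
  | refl (t : Tm Sig) : Subterm t t
  | appL {s t u : Tm Sig} : Subterm s t → Subterm s (app t u)
  | appR {s t u : Tm Sig} : Subterm s u → Subterm s (app t u)
  | lam {s t : Tm Sig} : Subterm s t → Subterm s (lam t)

/-- `lamN m t = λ…λ.t` with `m` abstractions. -/
def lamN : ℕ → Tm Sig → Tm Sig
  | 0, t => t
  | m + 1, t => lam (lamN m t)

end Tm

/-- β-reduction: the smallest rewrite relation (closed under abstraction, left and
right application and substitution) with `(λ.t) u →β t[0 := u]`. -/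
inductive Beta {Sig : Type} : Tm Sig → Tm Sig → Prop
  | beta (t u : Tm Sig) : Beta (Tm.app (Tm.lam t) u) (Tm.subst1 u t)
  | abs {t u : Tm Sig} : Beta t u → Beta (Tm.lam t) (Tm.lam u)
  | appL {t u v : Tm Sig} : Beta t u → Beta (Tm.app t v) (Tm.app u v)
  | appR {t u v : Tm Sig} : Beta t u → Beta (Tm.app v t) (Tm.app v u)
  | substC (σ : ℕ → Tm Sig) {t u : Tm Sig} : Beta t u → Beta (Tm.subst σ t) (Tm.subst σ u)

/-- Tait–Martin-Löf parallel β-reduction: the smallest parallel rewrite relation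
with `(λ.t₁) t₂ ▷β u₁[0 := u₂]` whenever `t₁ ▷β u₁` and `t₂ ▷β u₂`. -/
inductive PBeta {Sig : Type} : Tm Sig → Tm Sig → Prop
  | var (n : ℕ) : PBeta (Tm.var n) (Tm.var n)
  | sym (f : Sig) : PBeta (Tm.sym f) (Tm.sym f)
  | app {t₁ u₁ t₂ u₂ : Tm Sig} : PBeta t₁ u₁ → PBeta t₂ u₂ →
      PBeta (Tm.app t₁ t₂) (Tm.app u₁ u₂)
  | abs {t u : Tm Sig} : PBeta t u → PBeta (Tm.lam t) (Tm.lam u)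
  | substC (σ : ℕ → Tm Sig) {t u : Tm Sig} : PBeta t u → PBeta (Tm.subst σ t) (Tm.subst σ u)
  | beta {t₁ u₁ t₂ u₂ : Tm Sig} : PBeta t₁ u₁ → PBeta t₂ u₂ →
      PBeta (Tm.app (Tm.lam t₁) t₂) (Tm.subst1 u₂ u₁)

/-- β-normal forms. -/
def BetaNormal {Sig : Type} (t : Tm Sig) : Prop := ∀ u, ¬ Beta t u

/-- `IsBnf t n` : `n` is a β-normal form of `t`. -/
def IsBnf {Sig : Type} (t n : Tm Sig) : Prop :=
  Relation.ReflTransGen Beta t n ∧ BetaNormal n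

/-- Weakly β-normalizing terms. -/
def WNbeta {Sig : Type} (t : Tm Sig) : Prop := ∃ n, IsBnf t n

/-- Conditional rewrite rule `d1 = c1 ∧ … ∧ dn = cn ⊃ l ↦ r`:  every variable of
the `di`, `ci` and `r` occurs in `l`, and `l` is a non-variable algebraic term. -/
structure CondRule (Sig : Type) where
  conds : List (Tm Sig × Tm Sig)
  lhs : Tm Sig
  rhs : Tm Sig
  lhs_alg : Tm.Algebraic lhs
  lhs_not_var : ∀ n, lhs ≠ Tm.var n
  fv_conds : ∀ p ∈ conds,
    (∀ n, Tm.FVar p.1 n → Tm.FVar lhs n) ∧ (∀ n, Tm.FVar p.2 n → Tm.FVar lhs n)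
  fv_rhs : ∀ n, Tm.FVar rhs n → Tm.FVar lhs n

/-- Joinability: a common reduct. -/
def Joinable {α : Type} (R : α → α → Prop) (t u : α) : Prop :=
  ∃ v, Relation.ReflTransGen R t v ∧ Relation.ReflTransGen R u v

/-- One stratum of conditional rewriting: the smallest rewrite relation such that
`lσ → rσ` for every rule whose conditions are joinable w.r.t. `prev`. -/
inductive CondStep {Sig : Type} (Rules : Set (CondRule Sig))
    (prev : Tm Sig → Tm Sig → Prop) : Tm Sig → Tm Sig → Prop
  | rule {ρ : CondRule Sig} (hρ : ρ ∈ Rules) (σ : ℕ → Tm Sig)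
      (hconds : ∀ p ∈ ρ.conds, Joinable prev (Tm.subst σ p.1) (Tm.subst σ p.2)) :
      CondStep Rules prev (Tm.subst σ ρ.lhs) (Tm.subst σ ρ.rhs)
  | abs {t u : Tm Sig} : CondStep Rules prev t u →
      CondStep Rules prev (Tm.lam t) (Tm.lam u)
  | appL {t u v : Tm Sig} : CondStep Rules prev t u →
      CondStep Rules prev (Tm.app t v) (Tm.app u v)
  | appR {t u v : Tm Sig} : CondStep Rules prev t u →
      CondStep Rules prev (Tm.app v t) (Tm.app v u)
  | substC (σ : ℕ → Tm Sig) {t u : Tm Sig} : CondStep Rules prev t u →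
      CondStep Rules prev (Tm.subst σ t) (Tm.subst σ u)

/-- Stratified conditional rewriting `→_{R_i}`. -/
def CondRel {Sig : Type} (Rules : Set (CondRule Sig)) : ℕ → Tm Sig → Tm Sig → Prop
  | 0 => fun _ _ => False
  | i + 1 => CondStep Rules (CondRel Rules i)

/-- Conditional rewriting `→_R = ⋃ i, →_{R_i}`. -/
def CondRew {Sig : Type} (Rules : Set (CondRule Sig)) (t u : Tm Sig) : Prop :=
  ∃ i, CondRel Rules i t u

/-- Stratified β-conditional rewriting `→_{R(β)_i}`: conditions are evaluated
w.r.t. `→_{β ∪ R(β)_{i-1}}`. -/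
def BCondRel {Sig : Type} (Rules : Set (CondRule Sig)) : ℕ → Tm Sig → Tm Sig → Prop
  | 0 => fun _ _ => False
  | i + 1 => CondStep Rules (fun a b => Beta a b ∨ BCondRel Rules i a b)

/-- β-conditional rewriting `→_{R(β)} = ⋃ i, →_{R(β)_i}`. -/
def BCondRew {Sig : Type} (Rules : Set (CondRule Sig)) (t u : Tm Sig) : Prop :=
  ∃ i, BCondRel Rules i t u

def IsConfluent {α : Type} (R : α → α → Prop) : Prop :=
  ∀ t u v, Relation.ReflTransGen R t u → Relation.ReflTransGen R t v →
    ∃ w, Relation.ReflTransGen R u w ∧ Relation.ReflTransGen R v w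

def ConfluentOn {α : Type} (S : Set α) (R : α → α → Prop) : Prop :=
  ∀ t ∈ S, ∀ u v, Relation.ReflTransGen R t u → Relation.ReflTransGen R t v →
    ∃ w, Relation.ReflTransGen R u w ∧ Relation.ReflTransGen R v w

def Commutes {α : Type} (R₁ R₂ : α → α → Prop) : Prop :=
  ∀ s u t, Relation.ReflTransGen R₁ s u → Relation.ReflTransGen R₂ s t →
    ∃ v, Relation.ReflTransGen R₂ u v ∧ Relation.ReflTransGen R₁ t v

def LeftLinear {Sig : Type} (Rules : Set (CondRule Sig)) : Prop :=
  ∀ ρ ∈ Rules, Tm.LinearTm ρ.lhs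

/-- Semi-closed systems: in every rule the `ci` are closed applicative terms. -/
def SemiClosed {Sig : Type} (Rules : Set (CondRule Sig)) : Prop :=
  ∀ ρ ∈ Rules, ∀ p ∈ ρ.conds, Tm.Applicative p.2 ∧ Tm.ClosedTm p.2

def RightApplicative {Sig : Type} (Rules : Set (CondRule Sig)) : Prop :=
  ∀ ρ ∈ Rules, Tm.Applicative ρ.rhs

def RightAlgebraic {Sig : Type} (Rules : Set (CondRule Sig)) : Prop :=
  ∀ ρ ∈ Rules, Tm.Algebraic ρ.rhs

/-- Algebraic systems: in every rule the `di`, `ci` and `r` are algebraic. -/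
def AlgebraicSys {Sig : Type} (Rules : Set (CondRule Sig)) : Prop :=
  ∀ ρ ∈ Rules, (∀ p ∈ ρ.conds, Tm.Algebraic p.1 ∧ Tm.Algebraic p.2) ∧ Tm.Algebraic ρ.rhs

/-- A term respects the arity `a` if it contains no subterm `f t1 … tn` with `n > a f`. -/
def RespectsArity {Sig : Type} (a : Sig → ℕ) (t : Tm Sig) : Prop :=
  ∀ (f : Sig) (ts : List (Tm Sig)),
    Tm.Subterm (Tm.appList (Tm.sym f) ts) t → ts.length ≤ a f

/-- A conditional rule respects `a` if the `di`, `ci` and both sides of `l ↦ r`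
respect `a`, and `l = f l1 … lk` with `k = a f`. -/
def RuleRespectsArity {Sig : Type} (a : Sig → ℕ) (ρ : CondRule Sig) : Prop :=
  (∀ p ∈ ρ.conds, RespectsArity a p.1 ∧ RespectsArity a p.2) ∧
  RespectsArity a ρ.lhs ∧ RespectsArity a ρ.rhs ∧
  ∃ (f : Sig) (ls : List (Tm Sig)), ρ.lhs = Tm.appList (Tm.sym f) ls ∧ ls.length = a f

def SysRespectsArity {Sig : Type} (a : Sig → ℕ) (Rules : Set (CondRule Sig)) : Prop :=
  ∀ ρ ∈ Rules, RuleRespectsArity a ρ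

/-- `AN_a` : terms having a β-normal form, whose β-normal form respects `a`. -/
def ANset {Sig : Type} (a : Sig → ℕ) : Set (Tm Sig) :=
  {t | ∃ n, IsBnf t n ∧ RespectsArity a n}

/-- The rewrite relation of the unconditional system `R̄` containing `l ↦ di` and
`l ↦ r` for each rule `d⃗ = c⃗ ⊃ l ↦ r` of `R`. -/
inductive BarRel {Sig : Type} (Rules : Set (CondRule Sig)) : Tm Sig → Tm Sig → Prop
  | ruleCond {ρ : CondRule Sig} (hρ : ρ ∈ Rules) {p : Tm Sig × Tm Sig} (hp : p ∈ ρ.conds)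
      (σ : ℕ → Tm Sig) : BarRel Rules (Tm.subst σ ρ.lhs) (Tm.subst σ p.1)
  | ruleRhs {ρ : CondRule Sig} (hρ : ρ ∈ Rules) (σ : ℕ → Tm Sig) :
      BarRel Rules (Tm.subst σ ρ.lhs) (Tm.subst σ ρ.rhs)
  | abs {t u : Tm Sig} : BarRel Rules t u → BarRel Rules (Tm.lam t) (Tm.lam u)
  | appL {t u v : Tm Sig} : BarRel Rules t u → BarRel Rules (Tm.app t v) (Tm.app u v)
  | appR {t u v : Tm Sig} : BarRel Rules t u → BarRel Rules (Tm.app v t) (Tm.app v u)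
  | substC (σ : ℕ → Tm Sig) {t u : Tm Sig} : BarRel Rules t u →
      BarRel Rules (Tm.subst σ t) (Tm.subst σ u)

/-- Conditionally `(R, a)`-stable sets of terms. -/
def CondStable {Sig : Type} (Rules : Set (CondRule Sig)) (a : Sig → ℕ)
    (S : Set (Tm Sig)) : Prop :=
  (∀ t ∈ S, RespectsArity a t) ∧
  (∀ t ∈ S, ∀ u, (Beta t u ∨ BarRel Rules t u) → u ∈ S) ∧
  (∀ t ∈ S, ∀ u, Tm.Subterm u t → u ∈ S)

/-- Head β-step along an application spine. -/
inductive HeadAux {Sig : Type} : Tm Sig → Tm Sig → Prop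
  | beta (b a₀ : Tm Sig) : HeadAux (Tm.app (Tm.lam b) a₀) (Tm.subst1 a₀ b)
  | app {t u : Tm Sig} (v : Tm Sig) : HeadAux t u → HeadAux (Tm.app t v) (Tm.app u v)

/-- Head β-reduction `→h` : `λx⃗.(λy.b) a₀ a₁ … aₙ →h λx⃗.b[y:=a₀] a₁ … aₙ`. -/
inductive HeadRed {Sig : Type} : Tm Sig → Tm Sig → Prop
  | base {t u : Tm Sig} : HeadAux t u → HeadRed t u
  | lam {t u : Tm Sig} : HeadRed t u → HeadRed (Tm.lam t) (Tm.lam u)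

/-- The relation `≻` : (a) `λx⃗.v a1 … an ≻ ai` for `v` a variable or a symbol and
`n > 0`; (b) `λx⃗.(λy.b) a0 a1 … an ≻ λx⃗.b[y:=a0] a1 … an` (a head β-step). -/
def SuccRel {Sig : Type} (t u : Tm Sig) : Prop :=
  (∃ (m : ℕ) (h : Tm Sig) (args : List (Tm Sig)),
    ((∃ n, h = Tm.var n) ∨ (∃ f, h = Tm.sym f)) ∧ args ≠ [] ∧
    t = Tm.lamN m (Tm.appList h args) ∧ u ∈ args)
  ∨ HeadRed t u

/-- The nested parallelization `▷_{R_i}` of `→_{R_i}`: the smallest parallel rewrite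
relation with `lσ ▷ rτ` whenever `lσ →_{R_i} rσ` and `σ ▷ τ`. -/
inductive NPar {Sig : Type} (Rules : Set (CondRule Sig)) (i : ℕ) : Tm Sig → Tm Sig → Prop
  | var (n : ℕ) : NPar Rules i (Tm.var n) (Tm.var n)
  | sym (f : Sig) : NPar Rules i (Tm.sym f) (Tm.sym f)
  | app {t₁ u₁ t₂ u₂ : Tm Sig} : NPar Rules i t₁ u₁ → NPar Rules i t₂ u₂ →
      NPar Rules i (Tm.app t₁ t₂) (Tm.app u₁ u₂)
  | abs {t u : Tm Sig} : NPar Rules i t u → NPar Rules i (Tm.lam t) (Tm.lam u)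
  | substC (σ : ℕ → Tm Sig) {t u : Tm Sig} : NPar Rules i t u →
      NPar Rules i (Tm.subst σ t) (Tm.subst σ u)
  | rule {ρ : CondRule Sig} (hρ : ρ ∈ Rules) (σ τ : ℕ → Tm Sig)
      (hstep : CondRel Rules i (Tm.subst σ ρ.lhs) (Tm.subst σ ρ.rhs))
      (hστ : ∀ n, NPar Rules i (σ n) (τ n)) :
      NPar Rules i (Tm.subst σ ρ.lhs) (Tm.subst τ ρ.rhs)

/-- The smallest parallel rewrite relation containing `R`. -/
inductive ParCl {Sig : Type} (R : Tm Sig → Tm Sig → Prop) : Tm Sig → Tm Sig → Prop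
  | base {t u : Tm Sig} : R t u → ParCl R t u
  | var (n : ℕ) : ParCl R (Tm.var n) (Tm.var n)
  | sym (f : Sig) : ParCl R (Tm.sym f) (Tm.sym f)
  | app {t₁ u₁ t₂ u₂ : Tm Sig} : ParCl R t₁ u₁ → ParCl R t₂ u₂ →
      ParCl R (Tm.app t₁ t₂) (Tm.app u₁ u₂)
  | abs {t u : Tm Sig} : ParCl R t u → ParCl R (Tm.lam t) (Tm.lam u)
  | substC (σ : ℕ → Tm Sig) {t u : Tm Sig} : ParCl R t u →
      ParCl R (Tm.subst σ t) (Tm.subst σ u)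

/-- A rooted β-conditional rewrite step `lσ →_{R(β)_i} rσ` for the rule `ρ` and the
substitution `σ`: `ρ ∈ R` and the conditions of `ρ` instantiated by `σ` are joinable
w.r.t. `→_{β ∪ R(β)_{i-1}}`. -/
def RootedBStep {Sig : Type} (Rules : Set (CondRule Sig)) :
    ℕ → CondRule Sig → (ℕ → Tm Sig) → Prop
  | 0 => fun _ _ => False
  | i + 1 => fun ρ σ => ρ ∈ Rules ∧
      ∀ p ∈ ρ.conds,
        Joinable (fun a b => Beta a b ∨ BCondRel Rules i a b)
          (Tm.subst σ p.1) (Tm.subst σ p.2)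

/-- Subterm at a position (positions only descend through applications, which is
enough for algebraic left-hand sides). -/
def subtermAt {Sig : Type} : Tm Sig → List Bool → Option (Tm Sig)
  | t, [] => some t
  | Tm.app a _, false :: p => subtermAt a p
  | Tm.app _ b, true :: p => subtermAt b p
  | _, _ :: _ => none

/-- Replacement at a position. -/
def replaceAt {Sig : Type} : Tm Sig → List Bool → Tm Sig → Option (Tm Sig)
  | _, [], s => some s
  | Tm.app a b, false :: p, s => (replaceAt a p s).map (fun a' => Tm.app a' b)
  | Tm.app a b, true :: p, s => (replaceAt b p s).map (fun b' => Tm.app a b')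
  | _, _ :: _, _ => none

/-- Conditional critical pairs: an overlap of `ρ₂` at a non-variable position `p` of
the left-hand side of `ρ₁` via a most general unifier (here presented with a pair of
substitutions, which accounts for variable-disjoint renamings). -/
def CriticalPair {Sig : Type} (Rules : Set (CondRule Sig))
    (conds : List (Tm Sig × Tm Sig)) (s t : Tm Sig) : Prop :=
  ∃ ρ₁ ∈ Rules, ∃ ρ₂ ∈ Rules, ∃ (p : List Bool) (w : Tm Sig) (σ₁ σ₂ : ℕ → Tm Sig),
    subtermAt ρ₁.lhs p = some w ∧
    (∀ n, w ≠ Tm.var n) ∧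
    ¬ (ρ₁ = ρ₂ ∧ p = []) ∧
    Tm.subst σ₁ w = Tm.subst σ₂ ρ₂.lhs ∧
    (∀ τ₁ τ₂ : ℕ → Tm Sig, Tm.subst τ₁ w = Tm.subst τ₂ ρ₂.lhs →
      ∃ δ : ℕ → Tm Sig, (∀ n, Tm.FVar ρ₁.lhs n → τ₁ n = Tm.subst δ (σ₁ n)) ∧
        (∀ n, Tm.FVar ρ₂.lhs n → τ₂ n = Tm.subst δ (σ₂ n))) ∧
    conds = ρ₁.conds.map (fun q => (Tm.subst σ₁ q.1, Tm.subst σ₁ q.2)) ++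
            ρ₂.conds.map (fun q => (Tm.subst σ₂ q.1, Tm.subst σ₂ q.2)) ∧
    replaceAt (Tm.subst σ₁ ρ₁.lhs) p (Tm.subst σ₂ ρ₂.rhs) = some s ∧
    t = Tm.subst σ₁ ρ₁.rhs

/-- A symbol is defined if it heads the left-hand side of some rule. -/
def DefinedSym {Sig : Type} (Rules : Set (CondRule Sig)) (f : Sig) : Prop :=
  ∃ ρ ∈ Rules, ∃ ts : List (Tm Sig), ρ.lhs = Tm.appList (Tm.sym f) ts

/-- OrthonormalSys systems. -/
def OrthonormalSys {Sig : Type} (Rules : Set (CondRule Sig)) : Prop :=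
  LeftLinear Rules ∧
  (∀ ρ ∈ Rules, ∀ p ∈ ρ.conds, Tm.ClosedTm p.2 ∧ BetaNormal p.2 ∧
    ∀ f, DefinedSym Rules f → ¬ Tm.Subterm (Tm.sym f) p.2) ∧
  (∀ (conds : List (Tm Sig × Tm Sig)) (s t : Tm Sig), CriticalPair Rules conds s t →
    ∃ i j : Fin conds.length, i ≠ j ∧
      (conds.get i).1 = (conds.get j).1 ∧ (conds.get i).2 ≠ (conds.get j).2)

/-- Dershowitz–Manna multiset extension of `<` on `ℕ`. -/
def MulLt (s t : Multiset ℕ) : Prop :=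
  ∃ X Y Z : Multiset ℕ, Y ≠ 0 ∧ s = Z + X ∧ t = Z + Y ∧ ∀ x ∈ X, ∃ y ∈ Y, x < y

/-! ### Renamings and composition of substitutions -/

namespace Tm

variable {Sig : Type}

/-- Lifting of a renaming under one binder. -/
def upRen (ξ : ℕ → ℕ) : ℕ → ℕ
  | 0 => 0
  | n + 1 => ξ n + 1

/-- Renaming of the free de Bruijn indices of a term. -/
def ren (ξ : ℕ → ℕ) : Tm Sig → Tm Sig
  | var n => var (ξ n)
  | app t u => app (ren ξ t) (ren ξ u)
  | lam t => lam (ren (upRen ξ) t)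
  | sym f => sym f

theorem lift_eq_ren (t : Tm Sig) (d : ℕ) :
    lift d t = ren (fun n => if n < d then n else n + 1) t := by
  induction t generalizing d with
  | var n => simp only [lift, ren]; split <;> rfl
  | app t u iht ihu => simp only [lift, ren, iht, ihu]
  | sym f => rfl
  | lam t ih =>
    simp only [lift, ren, ih]
    congr 2
    funext n
    cases n with
    | zero => simp [upRen]
    | succ n => simp only [upRen]; split <;> split <;> omega

theorem lift_zero_eq_ren (t : Tm Sig) : lift 0 t = ren Nat.succ t := by
  rw [lift_eq_ren]; rfl

theorem ren_eq_subst (t : Tm Sig) (ξ : ℕ → ℕ) : ren ξ t = subst (fun n => var (ξ n)) t := by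
  induction t generalizing ξ with
  | var n => rfl
  | app t u iht ihu => simp only [subst, ren, iht, ihu]
  | sym f => rfl
  | lam t ih =>
    simp only [subst, ren, ih]
    congr 2
    funext n
    cases n <;> simp [upRen, up, lift]

theorem subst_ren (t : Tm Sig) (ξ : ℕ → ℕ) (σ : ℕ → Tm Sig) :
    subst σ (ren ξ t) = subst (fun n => σ (ξ n)) t := by
  induction t generalizing ξ σ with
  | var n => rfl
  | app t u iht ihu => simp only [subst, ren, iht, ihu]
  | sym f => rfl
  | lam t ih =>
    simp only [subst, ren, ih]
    congr 2
    funext n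
    cases n <;> rfl

theorem ren_ren (t : Tm Sig) (ξ ζ : ℕ → ℕ) : ren ζ (ren ξ t) = ren (fun n => ζ (ξ n)) t := by
  rw [ren_eq_subst, subst_ren, ← ren_eq_subst t (fun n => ζ (ξ n))]

theorem ren_subst (t : Tm Sig) (ξ : ℕ → ℕ) (σ : ℕ → Tm Sig) :
    ren ξ (subst σ t) = subst (fun n => ren ξ (σ n)) t := by
  induction t generalizing ξ σ with
  | var n => rfl
  | app t u iht ihu => simp only [subst, ren, iht, ihu]
  | sym f => rfl
  | lam t ih =>
    simp only [subst, ren, ih]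
    congr 2
    funext n
    cases n with
    | zero => rfl
    | succ n => simp only [up, lift_zero_eq_ren, ren_ren]; rfl

theorem subst_subst (t : Tm Sig) (σ θ : ℕ → Tm Sig) :
    subst θ (subst σ t) = subst (fun n => subst θ (σ n)) t := by
  induction t generalizing σ θ with
  | var n => rfl
  | app t u iht ihu => simp only [subst, iht, ihu]
  | sym f => rfl
  | lam t ih =>
    simp only [subst, ih]
    congr 2
    funext n
    cases n with
    | zero => rfl
    | succ n => simp only [up, lift_zero_eq_ren, subst_ren, ren_subst]

/-! ### Spine heads of left-hand sides and of head redexes -/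

/-- The head of the application spine of a term: the leftmost non-application. -/
def spineHead : Tm Sig → Tm Sig
  | app t _ => spineHead t
  | var n => var n
  | lam t => lam t
  | sym f => sym f

theorem spineHead_subst_appList (σ : ℕ → Tm Sig) (f : Sig) (ts : List (Tm Sig)) :
    ∀ h : Tm Sig, spineHead (subst σ h) = sym f →
      spineHead (subst σ (appList h ts)) = sym f := by
  induction ts with
  | nil => exact fun h hh => hh
  | cons u us ih => exact fun h hh => ih (app h u) hh

end Tm

open Tm

theorem CondRule.spineHead_lhs {Sig : Type} (ρ : CondRule Sig) (σ : ℕ → Tm Sig) :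
    ∃ f, spineHead (subst σ ρ.lhs) = sym f := by
  have h := ρ.lhs_alg
  generalize hl : ρ.lhs = l at h
  cases h with
  | var n => exact absurd hl (ρ.lhs_not_var n)
  | symApp f ts _ => exact ⟨f, spineHead_subst_appList σ f ts _ rfl⟩

theorem HeadAux.spineHead_eq {Sig : Type} {s u : Tm Sig} (h : HeadAux s u) :
    ∃ b, spineHead s = lam b := by
  induction h with
  | beta b a => exact ⟨b, rfl⟩
  | app v _ ih => exact ih

/-! ### The nested parallel relation without the substitution rule -/

theorem CondRel.subst {Sig : Type} {Rules : Set (CondRule Sig)} {i : ℕ} {t u : Tm Sig}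
    (h : CondRel Rules i t u) (θ : ℕ → Tm Sig) :
    CondRel Rules i (Tm.subst θ t) (Tm.subst θ u) := by
  cases i with
  | zero => exact h
  | succ i => exact CondStep.substC θ h

/-- The nested parallel relation `▷_{R_i}` generated without closure under substitution. -/
inductive NParCore {Sig : Type} (Rules : Set (CondRule Sig)) (i : ℕ) : Tm Sig → Tm Sig → Prop
  | var (n : ℕ) : NParCore Rules i (Tm.var n) (Tm.var n)
  | sym (f : Sig) : NParCore Rules i (Tm.sym f) (Tm.sym f)
  | app {t₁ u₁ t₂ u₂ : Tm Sig} : NParCore Rules i t₁ u₁ → NParCore Rules i t₂ u₂ →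
      NParCore Rules i (Tm.app t₁ t₂) (Tm.app u₁ u₂)
  | abs {t u : Tm Sig} : NParCore Rules i t u → NParCore Rules i (Tm.lam t) (Tm.lam u)
  | rule {ρ : CondRule Sig} (hρ : ρ ∈ Rules) (σ τ : ℕ → Tm Sig)
      (hstep : CondRel Rules i (Tm.subst σ ρ.lhs) (Tm.subst σ ρ.rhs))
      (hστ : ∀ n, NParCore Rules i (σ n) (τ n)) :
      NParCore Rules i (Tm.subst σ ρ.lhs) (Tm.subst τ ρ.rhs)

section

variable {Sig : Type} {Rules : Set (CondRule Sig)} {i : ℕ}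

theorem NParCore.refl (t : Tm Sig) : NParCore Rules i t t := by
  induction t with
  | var n => exact .var n
  | app t u iht ihu => exact .app iht ihu
  | lam t ih => exact .abs ih
  | sym f => exact .sym f

theorem NParCore.subst {t u : Tm Sig} (h : NParCore Rules i t u) (θ : ℕ → Tm Sig) :
    NParCore Rules i (Tm.subst θ t) (Tm.subst θ u) := by
  induction h generalizing θ with
  | var n => exact NParCore.refl _
  | sym f => exact .sym f
  | app _ _ ih₁ ih₂ => exact .app (ih₁ θ) (ih₂ θ)
  | abs _ ih => exact .abs (ih _)
  | rule hρ σ τ hstep _ ih =>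
    have hstep' := hstep.subst θ
    rw [subst_subst, subst_subst] at hstep' ⊢
    exact .rule hρ _ _ hstep' fun n => ih n θ

/-- Lifting is a substitution, so a pointwise parallel step between substitutions goes under
binders. -/
theorem NParCore.up {σ τ : ℕ → Tm Sig} (h : ∀ n, NParCore Rules i (σ n) (τ n)) (n : ℕ) :
    NParCore Rules i (Tm.up σ n) (Tm.up τ n) := by
  cases n with
  | zero => exact .var 0
  | succ n =>
    simp only [Tm.up, lift_zero_eq_ren, ren_eq_subst]
    exact (h n).subst _

/-- In the rule case the two parallel substitutions are merged into the one used by the rule,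
which the nesting in the definition of the relation allows. -/
theorem NParCore.subst_par {t u : Tm Sig} (h : NParCore Rules i t u) {θ η : ℕ → Tm Sig}
    (hθη : ∀ n, NParCore Rules i (θ n) (η n)) :
    NParCore Rules i (Tm.subst θ t) (Tm.subst η u) := by
  induction h generalizing θ η with
  | var n => exact hθη n
  | sym f => exact .sym f
  | app _ _ ih₁ ih₂ => exact .app (ih₁ hθη) (ih₂ hθη)
  | abs _ ih => exact .abs (ih (NParCore.up hθη))
  | rule hρ σ τ hstep _ ih =>
    have hstep' := hstep.subst θ
    rw [subst_subst, subst_subst] at hstep'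
    rw [subst_subst, subst_subst]
    exact .rule hρ _ _ hstep' fun n => ih n hθη

theorem NPar.core {t u : Tm Sig} (h : NPar Rules i t u) : NParCore Rules i t u := by
  induction h with
  | var n => exact .var n
  | sym f => exact .sym f
  | app _ _ ih₁ ih₂ => exact .app ih₁ ih₂
  | abs _ ih => exact .abs ih
  | substC σ _ ih => exact ih.subst σ
  | rule hρ σ τ hstep _ ih => exact .rule hρ σ τ hstep ih

theorem NParCore.npar {t u : Tm Sig} (h : NParCore Rules i t u) : NPar Rules i t u := by
  induction h with
  | var n => exact .var n
  | sym f => exact .sym f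
  | app _ _ ih₁ ih₂ => exact .app ih₁ ih₂
  | abs _ ih => exact .abs ih
  | rule hρ σ τ hstep _ ih => exact .rule hρ σ τ hstep ih

/-! ### Inversion and commutation -/

theorem NParCore.lam_inv {b t : Tm Sig} (h : NParCore Rules i (lam b) t) :
    ∃ b', t = lam b' ∧ NParCore Rules i b b' := by
  generalize hs : lam b = s at h
  cases h with
  | var n => cases hs
  | sym f => cases hs
  | app _ _ => cases hs
  | abs h => cases hs; exact ⟨_, rfl, h⟩
  | @rule ρ _ σ _ _ _ =>
    obtain ⟨f, hf⟩ := ρ.spineHead_lhs σ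
    rw [← hs] at hf
    cases hf

/-- No rule applies at the root of an application whose spine head is an abstraction. -/
theorem NParCore.app_inv {b p q t : Tm Sig} (hp : spineHead p = lam b)
    (h : NParCore Rules i (Tm.app p q) t) :
    ∃ p' q', t = Tm.app p' q' ∧ NParCore Rules i p p' ∧ NParCore Rules i q q' := by
  generalize hs : Tm.app p q = s at h
  cases h with
  | var n => cases hs
  | sym f => cases hs
  | app h₁ h₂ => cases hs; exact ⟨_, _, rfl, h₁, h₂⟩
  | abs h => cases hs
  | @rule ρ _ σ _ _ _ =>
    obtain ⟨f, hf⟩ := ρ.spineHead_lhs σ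
    rw [← hs, spineHead, hp] at hf
    cases hf

theorem HeadAux.commutes {s t u : Tm Sig} (h : HeadAux s u) (hst : NParCore Rules i s t) :
    ∃ v, NParCore Rules i u v ∧ HeadAux t v := by
  induction h generalizing t with
  | beta b a =>
    obtain ⟨p, a', rfl, hp, ha⟩ := hst.app_inv (b := b) rfl
    obtain ⟨b', rfl, hb⟩ := hp.lam_inv
    refine ⟨_, hb.subst_par fun n => ?_, .beta b' a'⟩
    cases n with
    | zero => exact ha
    | succ n => exact .var n
  | app q h ih =>
    obtain ⟨b, hb⟩ := h.spineHead_eq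
    obtain ⟨p', q', rfl, hp, hq⟩ := hst.app_inv hb
    obtain ⟨v, hv, htv⟩ := ih hp
    exact ⟨_, hv.app hq, htv.app q'⟩

theorem HeadRed.commutes {s t u : Tm Sig} (h : HeadRed s u) (hst : NParCore Rules i s t) :
    ∃ v, NParCore Rules i u v ∧ HeadRed t v := by
  induction h generalizing t with
  | base h =>
    obtain ⟨v, hv, htv⟩ := h.commutes hst
    exact ⟨v, hv, .base htv⟩
  | lam _ ih =>
    obtain ⟨t', rfl, ht⟩ := hst.lam_inv
    obtain ⟨v, hv, htv⟩ := ih ht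
    exact ⟨_, hv.abs, htv.lam⟩

end

/-- One-step commutation of head β-reduction with the nested parallel
conditional relation: if `u ←h s ▷_{R_i} t` then `u ▷_{R_i} v ←h t` for some `v`. -/
theorem head_commutes_npar {Sig : Type} (Rules : Set (CondRule Sig)) (i : ℕ)
    (s t u : Tm Sig) (h₁ : HeadRed s u) (h₂ : NPar Rules i s t) :
    ∃ v, NPar Rules i u v ∧ HeadRed t v := by
  obtain ⟨v, hv, htv⟩ := h₁.commutes h₂.core
  exact ⟨v, hv.npar, htv⟩
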